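/- arXiv:2408.13125 — 6 statements merged into one kernel-verified Lean document; each statement's English description precedes it below -/
import Mathlib

section
/- Let c, t, T be real numbers with t ≠ 0 and T ≠ 0, and set s = T/t + t/T (note s ≠ 0 since s = (t² + T²)/(tT)). Define x = c·(1/t + t)/s and y = c·(1/T − T)/s. Then the point (x, y) lies on the elliptic Apollonian circle determined by t and on the hyperbolic Apollonian circle determined by T; that is, x² + y² − c² = (1/t − t)·c·y and x² + y² + c² = (1/T + T)·c·x. -/
/-!
Put `s = T / t + t / T` and `r = t * T + 1 / (t * T)`. For `t = exp a` and `T = exp b` these are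
`2 cosh (a - b)` and `2 cosh (a + b)`, and the product formulas for `cosh` and `sinh` become
`(1/t + t) (1/T + T) = r + s`, `(1/t - t) (1/T - T) = r - s` and
`(1/t + t)² + (1/T - T)² = s r`. The last one says that the point `(x, y)` satisfies
`x² + y² = c² r / s`; the first two say that the right-hand sides of the hyperbolic and the
elliptic circle equations are `c² (r + s) / s` and `c² (r - s) / s`.
-/

section Field

variable {K : Type*} [Field K]

theorem one_div_add_self_mul_one_div_add_self (t T : K) :
    (1 / t + t) * (1 / T + T) = (t * T + 1 / (t * T)) + (T / t + t / T) := by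
  ring

theorem one_div_sub_self_mul_one_div_sub_self (t T : K) :
    (1 / t - t) * (1 / T - T) = (t * T + 1 / (t * T)) - (T / t + t / T) := by
  ring

theorem one_div_add_self_sq_add_one_div_sub_self_sq {t T : K} (ht : t ≠ 0) (hT : T ≠ 0) :
    (1 / t + t) ^ 2 + (1 / T - T) ^ 2 = (T / t + t / T) * (t * T + 1 / (t * T)) := by
  field_simp
  ring

theorem apollonian_circles_common_point_general {c t T : K} (ht : t ≠ 0) (hT : T ≠ 0)
    {s : K} (hs : s = T / t + t / T) (hs₀ : s ≠ 0)
    {x y : K} (hx : x = c * (1 / t + t) / s) (hy : y = c * (1 / T - T) / s) :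
    x ^ 2 + y ^ 2 - c ^ 2 = (1 / t - t) * c * y ∧
    x ^ 2 + y ^ 2 + c ^ 2 = (1 / T + T) * c * x := by
  set r := t * T + 1 / (t * T) with hr
  have sq_add_sq : x ^ 2 + y ^ 2 = c ^ 2 * r / s := calc
    x ^ 2 + y ^ 2 = c ^ 2 * ((1 / t + t) ^ 2 + (1 / T - T) ^ 2) / s ^ 2 := by rw [hx, hy]; ring
    _ = c ^ 2 * (s * r) / s ^ 2 := by
      rw [one_div_add_self_sq_add_one_div_sub_self_sq ht hT, ← hs, ← hr]
    _ = c ^ 2 * r / s := by field_simp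
  constructor
  · calc
      x ^ 2 + y ^ 2 - c ^ 2 = c ^ 2 * (r - s) / s := by rw [sq_add_sq]; field_simp
      _ = c ^ 2 * ((1 / t - t) * (1 / T - T)) / s := by
        rw [one_div_sub_self_mul_one_div_sub_self, ← hs, ← hr]
      _ = (1 / t - t) * c * y := by rw [hy]; ring
  · calc
      x ^ 2 + y ^ 2 + c ^ 2 = c ^ 2 * (r + s) / s := by rw [sq_add_sq]; field_simp
      _ = c ^ 2 * ((1 / t + t) * (1 / T + T)) / s := by
        rw [one_div_add_self_mul_one_div_add_self, ← hs, ← hr]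
      _ = (1 / T + T) * c * x := by rw [hx]; ring

end Field

theorem div_add_div_swap_ne_zero {K : Type*} [Field K] [LinearOrder K] [IsStrictOrderedRing K]
    {a b : K} (ha : a ≠ 0) (hb : b ≠ 0) : a / b + b / a ≠ 0 := by
  have sum_sq_ne_zero : a * a + b * b ≠ 0 := fun h => ha (mul_self_add_mul_self_eq_zero.mp h).1
  rw [div_add_div _ _ hb ha]
  exact div_ne_zero sum_sq_ne_zero (mul_ne_zero hb ha)

/-- De Casteljau's common parametrization of the pencil of Apollonian circles with
base/limiting points `G = (c,0)`, `D = (-c,0)`: the point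
`(x, y) = (c·(1/t + t)/s, c·(1/T − T)/s)` with `s = T/t + t/T` lies on the elliptic
Apollonian circle of parameter `t` and on the hyperbolic Apollonian circle of
parameter `T`. -/
theorem apollonian_circles_common_point (c t T : ℝ) (ht : t ≠ 0) (hT : T ≠ 0)
    (s : ℝ) (hs : s = T / t + t / T)
    (x y : ℝ) (hx : x = c * (1 / t + t) / s) (hy : y = c * (1 / T - T) / s) :
    x ^ 2 + y ^ 2 - c ^ 2 = (1 / t - t) * c * y ∧
    x ^ 2 + y ^ 2 + c ^ 2 = (1 / T + T) * c * x := by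
  have hs₀ : s ≠ 0 := hs ▸ div_add_div_swap_ne_zero hT ht
  exact apollonian_circles_common_point_general ht hT hs hs₀ hx hy
end

section
/- Let c, t, T be real numbers with t ≠ 0, t ≠ 1, t ≠ −1 and T ≠ 0, and set D = (1/t − t)·(1/T + T) (note D ≠ 0). Define x = 2c·(1/t + t)/D and y = 2c·(1/T − T)/D. Then the point (x, y) lies on the confocal ellipse determined by t and on the confocal hyperbola determined by T; that is, (x/(1/t + t))² + (y/2)² = (c/(1/t − t))² and ((1/T − T)·x/2)² − y² = (c·(1/T − T)/(1/T + T))². -/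
/-!
Write `a = 1/t + t`, `b = 1/t - t`, `A = 1/T + T`, `B = 1/T - T`, so that `a² - b² = A² - B² = 4`.
Hence `(2/A, B/A)` lies on the unit circle and `(a/b, 2/b)` on the unit hyperbola. As
`(x/a, y/2) = (c/b) • (2/A, B/A)` and `(Bx/2, y) = (cB/A) • (a/b, 2/b)`, the two conic
equations are these two unit equations, rescaled.
-/

section Field

variable {K : Type*} [Field K] {t : K}

lemma one_div_add_self_ne_zero (ht : t ≠ 0) (ht_sq : t ^ 2 ≠ -1) : 1 / t + t ≠ 0 := by
  have h_factor : 1 / t + t = (t ^ 2 + 1) / t := by field_simp; ring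
  rw [h_factor]
  exact div_ne_zero (fun h => ht_sq (eq_neg_of_add_eq_zero_left h)) ht

lemma one_div_sub_self_ne_zero (ht : t ≠ 0) (ht1 : t ≠ 1) (ht1' : t ≠ -1) :
    1 / t - t ≠ 0 := by
  have h_factor : 1 / t - t = (1 - t) * (t + 1) / t := by field_simp; ring
  rw [h_factor]
  exact div_ne_zero
    (mul_ne_zero (sub_ne_zero.mpr ht1.symm) fun h => ht1' (eq_neg_of_add_eq_zero_left h)) ht

lemma one_div_add_self_sq (ht : t ≠ 0) : (1 / t + t) ^ 2 = 2 ^ 2 + (1 / t - t) ^ 2 := by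
  field_simp
  ring

lemma unit_circle_parametrization (ht : t ≠ 0) (ht_sq : t ^ 2 ≠ -1) :
    (2 / (1 / t + t)) ^ 2 + ((1 / t - t) / (1 / t + t)) ^ 2 = 1 := by
  rw [div_pow, div_pow, ← add_div, ← one_div_add_self_sq ht]
  exact div_self (pow_ne_zero 2 (one_div_add_self_ne_zero ht ht_sq))

lemma unit_hyperbola_parametrization (ht : t ≠ 0) (ht1 : t ≠ 1) (ht1' : t ≠ -1) :
    ((1 / t + t) / (1 / t - t)) ^ 2 - (2 / (1 / t - t)) ^ 2 = 1 := by
  rw [div_pow, div_pow, ← sub_div, one_div_add_self_sq ht, add_sub_cancel_left]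
  exact div_self (pow_ne_zero 2 (one_div_sub_self_ne_zero ht ht1 ht1'))

theorem confocal_conics_common_point_general [NeZero (2 : K)] (c t T : K)
    (ht : t ≠ 0) (ht1 : t ≠ 1) (ht1' : t ≠ -1) (ht_sq : t ^ 2 ≠ -1)
    (hT : T ≠ 0) (hT_sq : T ^ 2 ≠ -1)
    (D : K) (hD : D = (1 / t - t) * (1 / T + T))
    (x y : K) (hx : x = 2 * c * (1 / t + t) / D) (hy : y = 2 * c * (1 / T - T) / D) :
    (x / (1 / t + t)) ^ 2 + (y / 2) ^ 2 = (c / (1 / t - t)) ^ 2 ∧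
    ((1 / T - T) * x / 2) ^ 2 - y ^ 2 = (c * (1 / T - T) / (1 / T + T)) ^ 2 := by
  have h_circle := unit_circle_parametrization hT hT_sq
  have h_hyperbola := unit_hyperbola_parametrization ht ht1 ht1'
  have ha : 1 / t + t ≠ 0 := one_div_add_self_ne_zero ht ht_sq
  have h2 : (2 : K) ≠ 0 := two_ne_zero
  subst hD hx hy
  generalize 1 / t + t = a, 1 / t - t = b, 1 / T + T = A, 1 / T - T = B at *
  constructor
  · calc (2 * c * a / (b * A) / a) ^ 2 + (2 * c * B / (b * A) / 2) ^ 2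
        = (c / b) ^ 2 * ((2 / A) ^ 2 + (B / A) ^ 2) := by field_simp
      _ = (c / b) ^ 2 := by rw [h_circle, mul_one]
  · calc (B * (2 * c * a / (b * A)) / 2) ^ 2 - (2 * c * B / (b * A)) ^ 2
        = (c * B / A) ^ 2 * ((a / b) ^ 2 - (2 / b) ^ 2) := by field_simp
      _ = (c * B / A) ^ 2 := by rw [h_hyperbola, mul_one]

end Field

/-- De Casteljau's common parametrization of the confocal conics with foci
`G = (c,0)`, `D = (-c,0)`: the point
`(x, y) = (2c·(1/t + t)/D, 2c·(1/T − T)/D)` with `D = (1/t − t)·(1/T + T)` lies on the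
confocal ellipse of parameter `t` and on the confocal hyperbola of parameter `T`
(the latter stated in denominator-cleared form). -/
theorem confocal_conics_common_point (c t T : ℝ) (ht : t ≠ 0) (ht1 : t ≠ 1)
    (ht1' : t ≠ -1) (hT : T ≠ 0)
    (D : ℝ) (hD : D = (1 / t - t) * (1 / T + T))
    (x y : ℝ) (hx : x = 2 * c * (1 / t + t) / D) (hy : y = 2 * c * (1 / T - T) / D) :
    (x / (1 / t + t)) ^ 2 + (y / 2) ^ 2 = (c / (1 / t - t)) ^ 2 ∧
    ((1 / T - T) * x / 2) ^ 2 - y ^ 2 = (c * (1 / T - T) / (1 / T + T)) ^ 2 := by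
  have sq_ne_neg_one (s : ℝ) : s ^ 2 ≠ -1 := (neg_one_lt_zero.trans_le (sq_nonneg s)).ne'
  exact confocal_conics_common_point_general c t T ht ht1 ht1' (sq_ne_neg_one t) hT
    (sq_ne_neg_one T) D hD x y hx hy
end

section
/- Let c₁, c₂ be two distinct points of the complex plane ℂ and let R = dist(c₁, c₂). Let f be the inversion with centre c₁ and radius R and let g be the inversion with centre c₂ and radius R. Then for every z ∈ ℂ with z ≠ c₁ and z ≠ c₂, applying the six alternating inversions f, g, f, g, f, g returns z; that is, (g ∘ f)^[3](z) = z. -/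
open EuclideanGeometry

/-! Write `f`, `g` for the two inversions and `σ` for the reflection in the perpendicular bisector
of the centres. Since the sphere of `g` passes through the centre of `f`, the inversion `f` carries
it to a hyperplane, which is that bisector because `f` fixes the centre of `g`. Hence `f` conjugates
`g` into `σ`, that is `g ∘ f = f ∘ σ`, and by symmetry `f ∘ g = g ∘ σ`. So
`g f g f = g f f σ = g σ = f g`, the inverse of `g f`. -/

section Euclidean

open AffineSubspace

variable {V P : Type*} [NormedAddCommGroup V] [InnerProductSpace ℝ V] [MetricSpace P]
  [NormedAddTorsor V P]

instance nonempty_perpBisector (a b : P) : Nonempty (perpBisector a b) :=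
  perpBisector_nonempty.to_subtype

instance hasOrthogonalProjection_direction_perpBisector (a b : P) :
    (perpBisector a b).direction.HasOrthogonalProjection := by
  rw [direction_perpBisector]
  infer_instance

/-- The point is the foot of the perpendicular from `x`. -/
lemma smul_vsub_vadd_mem_perpBisector (a b x : P) :
    ((dist x b ^ 2 - dist x a ^ 2) / dist a b ^ 2 / 2) • (b -ᵥ a) +ᵥ x ∈ perpBisector a b := by
  rcases eq_or_ne a b with rfl | hab
  · simp only [perpBisector_self, mem_top]
  have hd : dist a b ≠ 0 := dist_ne_zero.2 hab
  have law_of_cosines : dist x b ^ 2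
      = dist x a ^ 2 - 2 * inner ℝ (x -ᵥ a) (b -ᵥ a) + dist a b ^ 2 := by
    rw [dist_eq_norm_vsub V x b, dist_eq_norm_vsub V x a, dist_eq_norm_vsub' V a b,
      ← norm_sub_sq_real, vsub_sub_vsub_cancel_right]
  rw [mem_perpBisector_iff_inner_eq, vadd_vsub_assoc, inner_add_left, real_inner_smul_left,
    real_inner_self_eq_norm_sq, ← dist_eq_norm_vsub' V a b, law_of_cosines]
  field_simp
  ring

lemma reflection_perpBisector_eq_vadd (a b x : P) :
    reflection (perpBisector a b) x
      = ((dist x b ^ 2 - dist x a ^ 2) / dist a b ^ 2) • (b -ᵥ a) +ᵥ x := by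
  set v : V := ((dist x b ^ 2 - dist x a ^ 2) / dist a b ^ 2 / 2) • (b -ᵥ a) with hv
  have v_orthogonal : -v ∈ (perpBisector a b).directionᗮ := by
    rw [direction_perpBisector, Submodule.orthogonal_orthogonal]
    exact neg_mem (Submodule.smul_mem _ _ (Submodule.mem_span_singleton_self _))
  calc reflection (perpBisector a b) x
      = reflection (perpBisector a b) (-v +ᵥ (v +ᵥ x)) := by rw [neg_vadd_vadd]
    _ = v +ᵥ (v +ᵥ x) := by
      rw [reflection_orthogonal_vadd (smul_vsub_vadd_mem_perpBisector a b x) v_orthogonal, neg_neg]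
    _ = _ := by rw [vadd_vadd, hv, ← add_smul, add_halves]

lemma reflection_perpBisector_left (a b : P) : reflection (perpBisector a b) a = b := by
  rcases eq_or_ne a b with rfl | hab
  · simp [reflection_eq_self_iff]
  · have hd : dist a b ^ 2 ≠ 0 := pow_ne_zero 2 (dist_ne_zero.2 hab)
    rw [reflection_perpBisector_eq_vadd, dist_self, zero_pow two_ne_zero, sub_zero, div_self hd,
      one_smul, vsub_vadd]

lemma dist_reflection_perpBisector_left (a b x : P) :
    dist (reflection (perpBisector a b) x) a = dist x b := by
  rw [dist_comm, dist_reflection, reflection_perpBisector_left, dist_comm]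

/-- Stated at the preimages `b` and `x`, under the inversion centred at `a`, of the centre of the
outer inversion and of its argument. -/
lemma inversion_inversion_eq_inversion_reflection {a b x : P} (R : ℝ) (hba : b ≠ a) (hxa : x ≠ a)
    (hxb : x ≠ b) :
    inversion (inversion a R b) (dist (inversion a R b) a) (inversion a R x)
      = inversion a R (reflection (perpBisector a b) x) := by
  rcases eq_or_ne R 0 with rfl | hR
  · simp
  have hba' : dist b a ≠ 0 := dist_ne_zero.2 hba
  have hxa' : dist x a ≠ 0 := dist_ne_zero.2 hxa
  have hxb' : dist x b ≠ 0 := dist_ne_zero.2 hxb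
  have radius_ratio :
      dist (inversion a R b) a / dist (inversion a R x) (inversion a R b)
        = dist x a / dist x b := by
    rw [dist_inversion_center, dist_inversion_inversion hxa hba]
    field
  refine vsub_left_injective a ?_
  beta_reduce
  rw [inversion_vsub_center, dist_reflection_perpBisector_left, inversion, radius_ratio,
    vadd_vsub_assoc, ← vsub_sub_vsub_cancel_right _ (inversion a R b) a, inversion_vsub_center,
    inversion_vsub_center, reflection_perpBisector_eq_vadd, vadd_vsub_assoc, dist_comm a b]
  match_scalars <;> field

lemma inversion_inversion_dist_eq_inversion_reflection {a b x : P} (hab : a ≠ b) (hxa : x ≠ a)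
    (hxb : x ≠ b) :
    inversion b (dist a b) (inversion a (dist a b) x)
      = inversion a (dist a b) (reflection (perpBisector a b) x) := by
  simpa only [inversion_dist_center', dist_comm b a] using
    inversion_inversion_eq_inversion_reflection (dist a b) hab.symm hxa hxb

theorem six_alternating_inversions_identity_general {a b x : P} (hab : a ≠ b) (hxa : x ≠ a)
    (hxb : x ≠ b) :
    (inversion b (dist a b) ∘ inversion a (dist a b))^[3] x = x := by
  set f : P → P := inversion a (dist a b)
  set g : P → P := inversion b (dist a b)
  set σ : P ≃ᵃⁱ[ℝ] P := reflection (perpBisector a b)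
  have f_f (y : P) : f (f y) = y := inversion_inversion a (dist_ne_zero.2 hab) y
  have g_g (y : P) : g (g y) = y := inversion_inversion b (dist_ne_zero.2 hab) y
  have g_f : g (f x) = f (σ x) := inversion_inversion_dist_eq_inversion_reflection hab hxa hxb
  have f_g : f (g x) = g (σ x) := by
    simpa only [dist_comm b a, perpBisector_comm b a] using
      inversion_inversion_dist_eq_inversion_reflection hab.symm hxb hxa
  calc g (f (g (f (g (f x)))))
      = g (f (g (σ x))) := by rw [g_f, f_f]
    _ = x := by rw [← f_g, f_f, g_g]

end Euclidean

/-- De Casteljau's observation in bifocal coordinates: if `f` and `g` are the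
inversions of the complex plane centred at the two distinct points `c₁` and `c₂`,
both with radius `R = dist c₁ c₂` (tangential power `R²`), then the composition of
the six alternating inversions `f, g, f, g, f, g` is the identity away from the
two centres. -/
theorem six_alternating_inversions_identity (c₁ c₂ : ℂ) (hne : c₁ ≠ c₂)
    (R : ℝ) (hR : R = dist c₁ c₂)
    (f g : ℂ → ℂ) (hf : f = inversion c₁ R) (hg : g = inversion c₂ R) :
    ∀ z : ℂ, z ≠ c₁ → z ≠ c₂ → (g ∘ f)^[3] z = z := by
  subst hR hf hg
  exact fun _ hz₁ hz₂ ↦ six_alternating_inversions_identity_general hne hz₁ hz₂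
end

section
/- Let q ≥ 1 be a natural number, let n = 2q + 1, and set d_k = sin(kπ/n) for 0 ≤ k ≤ q (so d_0 = 0). Then for every r with 1 ≤ r ≤ q one has d_q · (d_r − d_{r−1}) = d_1 · d_{q+1−r}, and consequently d_q · d_r = d_1 · ∑_{i = q−r+1}^{q} d_i. In particular all the ratios (d_r − d_{r−1})/d_{q+1−r} are equal to d_1/d_q. -/
open Real Finset

/-!
Write `d k` for the distance between vertices `k` steps apart in a regular `n`-gon. Ptolemy's
theorem for four vertices cutting the circle into arcs of `a`, `b`, `c` and `n - a - b - c` steps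
reads `d (a + b) * d (b + c) = d a * d c + d b * d (a + b + c)`. When `n = 2 * q + 1`, the two
longest diagonals `d q` and `d (q + 1)` are equal, so the arcs `a = q`, `b = 1`, `c = r` give
`d q * (d (r + 1) - d r) = d 1 * d (q - r)`; summing over `r` telescopes the left-hand side.
-/

theorem sin_add_mul_sin_add (x y z : ℝ) :
    sin (x + y) * sin (y + z) = sin x * sin z + sin y * sin (x + y + z) := by
  simp only [sin_add, cos_add]
  linear_combination sin x * sin z * sin_sq_add_cos_sq y

/-- The distance between two vertices `k` steps apart in a regular `n`-gon inscribed in a circle of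
unit diameter. It is defined for all `k`, being negative for `n < k < 2 * n`. -/
noncomputable def polygonDiagonal (n k : ℕ) : ℝ := sin (k * π / n)

@[simp]
theorem polygonDiagonal_zero (n : ℕ) : polygonDiagonal n 0 = 0 := by
  simp [polygonDiagonal]

theorem polygonDiagonal_pos {n k : ℕ} (hk : 0 < k) (hkn : k < n) : 0 < polygonDiagonal n k := by
  have hn : (0 : ℝ) < n := by exact_mod_cast hk.trans hkn
  refine sin_pos_of_pos_of_lt_pi (by positivity) ?_
  rw [div_lt_iff₀ hn, mul_comm π]
  gcongr

theorem polygonDiagonal_sub {n k : ℕ} (hk : k ≤ n) :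
    polygonDiagonal n (n - k) = polygonDiagonal n k := by
  obtain rfl | hn := eq_or_ne n 0
  · rw [Nat.le_zero.mp hk]
  · have hangle : ((n - k : ℕ) : ℝ) * π / n = π - k * π / n := by
      rw [Nat.cast_sub hk]
      field_simp
    rw [polygonDiagonal, hangle, sin_pi_sub, polygonDiagonal]

theorem polygonDiagonal_add_mul_polygonDiagonal_add (n a b c : ℕ) :
    polygonDiagonal n (a + b) * polygonDiagonal n (b + c) =
      polygonDiagonal n a * polygonDiagonal n c +
        polygonDiagonal n b * polygonDiagonal n (a + b + c) := by
  simp only [polygonDiagonal, Nat.cast_add, add_mul, add_div, sin_add_mul_sin_add]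

theorem polygonDiagonal_mul_succ_sub {q r : ℕ} (hr : r ≤ q) :
    polygonDiagonal (2 * q + 1) q *
        (polygonDiagonal (2 * q + 1) (r + 1) - polygonDiagonal (2 * q + 1) r) =
      polygonDiagonal (2 * q + 1) 1 * polygonDiagonal (2 * q + 1) (q - r) := by
  have hlongest : polygonDiagonal (2 * q + 1) (q + 1) = polygonDiagonal (2 * q + 1) q := by
    rw [← polygonDiagonal_sub (by lia : q ≤ 2 * q + 1)]
    congr 1
    lia
  have hreflect :
      polygonDiagonal (2 * q + 1) (q + 1 + r) = polygonDiagonal (2 * q + 1) (q - r) := by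
    rw [← polygonDiagonal_sub (by lia : q - r ≤ 2 * q + 1)]
    congr 1
    lia
  have hptolemy := polygonDiagonal_add_mul_polygonDiagonal_add (2 * q + 1) q 1 r
  rw [hlongest, hreflect, add_comm 1 r] at hptolemy
  linear_combination hptolemy

theorem polygonDiagonal_mul_eq_sum {q r : ℕ} (hr : r ≤ q + 1) :
    polygonDiagonal (2 * q + 1) q * polygonDiagonal (2 * q + 1) r =
      polygonDiagonal (2 * q + 1) 1 * ∑ i ∈ Icc (q + 1 - r) q, polygonDiagonal (2 * q + 1) i := by
  set d := polygonDiagonal (2 * q + 1) with hd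
  calc
    d q * d r = ∑ s ∈ range r, d q * (d (s + 1) - d s) := by
      rw [← mul_sum, sum_range_sub, hd, polygonDiagonal_zero, sub_zero]
    _ = ∑ s ∈ range r, d 1 * d (q - s) :=
      sum_congr rfl fun s hs ↦ polygonDiagonal_mul_succ_sub (by grind)
    _ = d 1 * ∑ i ∈ Icc (q + 1 - r) q, d i := by
      rw [← mul_sum, range_eq_Ico, sum_Ico_reflect d 0 hr, Nat.sub_zero, Ico_add_one_right_eq_Icc]

/-- De Casteljau's theorem on golden ratios for regular polygons: with
`d k = sin (kπ/(2q+1))` the diagonal lengths of a regular `(2q+1)`-gon inscribed in a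
circle of unit diameter, for every `1 ≤ r ≤ q` one has
`d q · (d r − d (r−1)) = d 1 · d (q+1−r)`, hence
`d q · d r = d 1 · ∑_{i=q−r+1}^{q} d i`, and all the ratios
`(d r − d (r−1)) / d (q+1−r)` equal `d 1 / d q`. -/
theorem golden_ratios_regular_polygon (q : ℕ) (hq : 1 ≤ q) (n : ℕ) (hn : n = 2 * q + 1)
    (d : ℕ → ℝ) (hd : ∀ k, d k = sin (k * π / n)) :
    ∀ r : ℕ, 1 ≤ r → r ≤ q →
      d q * (d r - d (r - 1)) = d 1 * d (q + 1 - r) ∧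
      d q * d r = d 1 * ∑ i ∈ Finset.Icc (q - r + 1) q, d i ∧
      (d r - d (r - 1)) / d (q + 1 - r) = d 1 / d q := by
  intro r hr hrq
  subst hn
  obtain rfl : d = polygonDiagonal (2 * q + 1) := funext hd
  have hstep : polygonDiagonal (2 * q + 1) q *
      (polygonDiagonal (2 * q + 1) r - polygonDiagonal (2 * q + 1) (r - 1)) =
        polygonDiagonal (2 * q + 1) 1 * polygonDiagonal (2 * q + 1) (q + 1 - r) := by
    obtain ⟨s, rfl⟩ := Nat.exists_eq_add_of_le' hr
    simpa using polygonDiagonal_mul_succ_sub (by lia : s ≤ q)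
  refine ⟨hstep, ?_, ?_⟩
  · rw [← Nat.sub_add_comm hrq]
    exact polygonDiagonal_mul_eq_sum (by lia)
  · have hpos_q : 0 < polygonDiagonal (2 * q + 1) q := polygonDiagonal_pos hq (by lia)
    have hpos_reflect : 0 < polygonDiagonal (2 * q + 1) (q + 1 - r) :=
      polygonDiagonal_pos (by lia) (by lia)
    rw [div_eq_div_iff hpos_reflect.ne' hpos_q.ne', mul_comm, hstep]
end

section
/- Let n ≥ 1 be a natural number and let M be the n×n real matrix with entries (0-indexed) M i j = 1 if i + j ≥ n − 1 and M i j = 0 otherwise. Let v be the vector with entries v j = sin((j+1)·π/(2n+1)) for 0 ≤ j ≤ n−1. Then M·v = λ·v with λ = 1/(2·sin(π/(2(2n+1)))); that is, the vector of diagonal lengths of the regular (2n+1)-gon is an eigenvector of M. -/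
open Real

/-!
Each row of the golden matrix sums a final segment of the diagonals `sin ((j + 1) * θ)`. Multiplied
by `2 * sin (θ / 2)` this sum telescopes to `cos ((n - i - 1 / 2) * θ) - cos ((n + 1 / 2) * θ)`.
For `θ = π / (2 * n + 1)` the angle `(n + 1 / 2) * θ` is `π / 2`, so the second cosine vanishes and
the first one is the complementary sine `sin ((i + 1) * θ)`.
-/

/-- De Casteljau's golden matrix: the `0`-`1` matrix whose ones fill the triangle on and below the
antidiagonal. The antidiagonal is encoded as `j = i.rev`. -/
def goldenMatrix (R : Type*) [Zero R] [One R] (n : ℕ) : Matrix (Fin n) (Fin n) R :=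
  Matrix.of fun i j => if i.rev ≤ j then 1 else 0

/-- The lengths `sin ((j + 1) * θ)`, `j < n`. For `θ = π / (2 * n + 1)` they are proportional to the
side and the diagonals of the regular `(2 * n + 1)`-gon; odd multiples of this angle give star
polygons. -/
noncomputable def diagonalLengths (n : ℕ) (θ : ℝ) : Fin n → ℝ :=
  fun j => sin ((j + 1) * θ)

theorem goldenMatrix_apply {R : Type*} [Zero R] [One R] {n : ℕ} (i j : Fin n) :
    goldenMatrix R n i j = if (i : ℕ) + j ≥ n - 1 then 1 else 0 :=
  if_congr (by rw [Fin.le_def, Fin.val_rev]; omega) rfl rfl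

theorem goldenMatrix_mulVec_apply {R : Type*} [NonAssocSemiring R] {n : ℕ} (f : Fin n → R)
    (i : Fin n) : (goldenMatrix R n).mulVec f i = ∑ j ∈ Finset.Ici i.rev, f j := by
  simp only [goldenMatrix, Matrix.mulVec, dotProduct, Matrix.of_apply, ite_mul, one_mul, zero_mul,
    ← Finset.sum_filter, Finset.filter_le_eq_Ici]

theorem two_mul_sin_half_mul_sum_Ico_sin (x θ : ℝ) {a b : ℕ} (hab : a ≤ b) :
    2 * sin (θ / 2) * ∑ k ∈ Finset.Ico a b, sin (x + k * θ) =
      cos (x + (a - 1 / 2) * θ) - cos (x + (b - 1 / 2) * θ) := by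
  have telescoping_term (k : ℕ) : 2 * sin (θ / 2) * sin (x + k * θ) =
      cos (x + (k - 1 / 2) * θ) - cos (x + ((k + 1 : ℕ) - 1 / 2) * θ) := by
    rw [mul_right_comm, two_mul_sin_mul_sin]
    push_cast
    ring_nf
  simp only [Finset.mul_sum, telescoping_term]
  rw [← neg_inj, ← Finset.sum_neg_distrib]
  simp only [neg_sub]
  exact Finset.sum_Ico_sub (fun k : ℕ => cos (x + (k - 1 / 2) * θ)) hab

theorem goldenMatrix_mulVec_diagonalLengths_apply {n : ℕ} (θ : ℝ) (i : Fin n) :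
    (goldenMatrix ℝ n).mulVec (diagonalLengths n θ) i =
      ∑ k ∈ Finset.Ico (i.rev : ℕ) n, sin (θ + k * θ) := by
  rw [goldenMatrix_mulVec_apply, ← Fin.map_valEmbedding_Ici, Finset.sum_map]
  simp only [diagonalLengths, Fin.valEmbedding_apply, add_one_mul, add_comm]

theorem two_mul_sin_half_smul_goldenMatrix_mulVec_diagonalLengths (n : ℕ) {θ : ℝ}
    (hθ : cos ((n + 1 / 2) * θ) = 0) :
    (2 * sin (θ / 2)) • (goldenMatrix ℝ n).mulVec (diagonalLengths n θ) =
      sin ((n + 1 / 2) * θ) • diagonalLengths n θ := by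
  ext i
  have rev_cast : ((i.rev : ℕ) : ℝ) = n - (i + 1) := by
    rw [Fin.val_rev, Nat.cast_sub i.isLt, Nat.cast_add_one]
  calc 2 * sin (θ / 2) * (goldenMatrix ℝ n).mulVec (diagonalLengths n θ) i
      = cos (θ + ((i.rev : ℕ) - 1 / 2) * θ) - cos (θ + (n - 1 / 2) * θ) := by
        rw [goldenMatrix_mulVec_diagonalLengths_apply,
          two_mul_sin_half_mul_sum_Ico_sin θ θ i.rev.isLt.le]
    _ = cos ((n + 1 / 2) * θ - (i + 1) * θ) - cos ((n + 1 / 2) * θ) := by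
        rw [rev_cast]
        ring_nf
    _ = sin ((n + 1 / 2) * θ) * sin ((i + 1) * θ) := by
        rw [cos_sub, hθ, zero_mul, zero_add, sub_zero]

/-- De Casteljau's golden matrix acting on a regular `(2n+1)`-gon: the vector of
diagonal lengths `v j = sin((j+1)π/(2n+1))` is an eigenvector of the `n×n` 0-1
matrix `M` (with `M i j = 1` iff `i + j ≥ n − 1`) with eigenvalue
`λ = 1/(2·sin(π/(2(2n+1))))`. -/
theorem golden_matrix_eigenvector (n : ℕ) (hn : 1 ≤ n)
    (M : Matrix (Fin n) (Fin n) ℝ)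
    (hM : ∀ i j : Fin n, M i j = if (i : ℕ) + (j : ℕ) ≥ n - 1 then 1 else 0)
    (v : Fin n → ℝ) (hv : ∀ j : Fin n, v j = sin (((j : ℕ) + 1) * π / (2 * n + 1)))
    (lam : ℝ) (hlam : lam = 1 / (2 * sin (π / (2 * (2 * n + 1))))) :
    M.mulVec v = lam • v := by
  set θ : ℝ := π / (2 * n + 1) with hθ
  have M_eq : M = goldenMatrix ℝ n :=
    Matrix.ext fun i j => (hM i j).trans (goldenMatrix_apply i j).symm
  have v_eq : v = diagonalLengths n θ :=
    funext fun j => by rw [hv, mul_div_assoc, diagonalLengths]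
  have lam_eq : lam = (2 * sin (θ / 2))⁻¹ := by
    rw [hlam, one_div, hθ, div_div, mul_comm (2 * (n : ℝ) + 1)]
  have angle_eq : (n + 1 / 2) * θ = π / 2 := by
    rw [hθ]
    field_simp
  have sin_half_pos : 0 < sin (θ / 2) := by
    have θ_le_pi : θ ≤ π := div_le_self pi_pos.le (by linarith [n.cast_nonneg (α := ℝ)])
    exact sin_pos_of_pos_of_lt_pi (by positivity) (by linarith [pi_pos])
  have scaled_eq := two_mul_sin_half_smul_goldenMatrix_mulVec_diagonalLengths n (θ := θ)
    (by rw [angle_eq, cos_pi_div_two])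
  rw [angle_eq, sin_pi_div_two, one_smul] at scaled_eq
  rw [M_eq, v_eq, lam_eq, eq_inv_smul_iff₀ (by positivity), scaled_eq]
end

section
/- For real numbers d, a, b, c, t, x, y, z, let Q₁* be the anti-quaternion matrix associated with (d,a,b,c) and let Q₂ be the matrix quaternion associated with (t,x,y,z). Set P = Q₁*·Q₂. Then: (i) P = Q₂·Q₁* (a quaternion and an anti-quaternion commute); (ii) P·Pᵀ = Pᵀ·P = n₁·n₂·I₄, where n₁ = d² + a² + b² + c², n₂ = t² + x² + y² + z², and I₄ is the 4×4 identity matrix; and (iii) det P = (n₁·n₂)², so P is positive. -/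
/-- De Casteljau's matrix quaternion associated with `(t,x,y,z) ∈ ℝ⁴`. -/
def matQ (t x y z : ℝ) : Matrix (Fin 4) (Fin 4) ℝ :=
  !![t, -x, -y, -z;
     x,  t, -z,  y;
     y,  z,  t, -x;
     z, -y,  x,  t]

/-- De Casteljau's anti-quaternion associated with `(t,x,y,z) ∈ ℝ⁴`. -/
def antiQ (t x y z : ℝ) : Matrix (Fin 4) (Fin 4) ℝ :=
  !![ t,  x,  y,  z;
     -x,  t, -z,  y;
     -y,  z,  t, -x;
     -z, -y,  x,  t]

/-!
In the basis `1, i, j, k`, the matrix quaternion of `q` is left multiplication `v ↦ q v` and the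
anti-quaternion of `q` is `v ↦ v q̄`. Hence they commute by associativity, and both depend
multiplicatively on `q`. Transposition corresponds to quaternion conjugation in either case, so
the orthogonality relations come from `q q̄ = q̄ q = |q|²`. Finally `v q̄` is the conjugate of
`q v̄`, so the two matrices are similar and have the same determinant.
-/

open Matrix Quaternion

section CommRing

variable {R : Type*} [CommRing R]

/-- The basis `1, i, j, k` of the quaternions. -/
noncomputable def quaternionBasis : Module.Basis (Fin 4) R ℍ[R] :=
  .ofEquivFun
    { Quaternion.equivTuple R with
      map_add' := fun p q ↦ by ext i; fin_cases i <;> simp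
      map_smul' := fun r q ↦ by ext i; fin_cases i <;> simp }

@[simp]
theorem quaternionBasis_repr (q : ℍ[R]) (i : Fin 4) :
    quaternionBasis.repr q i = ![q.re, q.imI, q.imJ, q.imK] i :=
  rfl

@[simp]
theorem re_quaternionBasis (i : Fin 4) :
    (quaternionBasis i : ℍ[R]).re = if i = 0 then 1 else 0 :=
  quaternionBasis.repr_self_apply i 0

@[simp]
theorem imI_quaternionBasis (i : Fin 4) :
    (quaternionBasis i : ℍ[R]).imI = if i = 1 then 1 else 0 :=
  quaternionBasis.repr_self_apply i 1

@[simp]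
theorem imJ_quaternionBasis (i : Fin 4) :
    (quaternionBasis i : ℍ[R]).imJ = if i = 2 then 1 else 0 :=
  quaternionBasis.repr_self_apply i 2

@[simp]
theorem imK_quaternionBasis (i : Fin 4) :
    (quaternionBasis i : ℍ[R]).imK = if i = 3 then 1 else 0 :=
  quaternionBasis.repr_self_apply i 3

/-- The matrix quaternion of `q`: the matrix of `v ↦ q * v` in the basis `1, i, j, k`. -/
noncomputable def quaternionMatrix : ℍ[R] →ₐ[R] Matrix (Fin 4) (Fin 4) R :=
  Algebra.leftMulMatrix quaternionBasis

/-- The anti-quaternion of `q`: the matrix of `v ↦ v * star q` in the basis `1, i, j, k`.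
The conjugation makes it multiplicative, rather than anti-multiplicative, in `q`. -/
noncomputable def antiQuaternionMatrix : ℍ[R] →ₐ[R] Matrix (Fin 4) (Fin 4) R :=
  (LinearMap.toMatrixAlgEquiv quaternionBasis).toAlgHom.comp
    ((Algebra.lsmul R R ℍ[R]).comp (Quaternion.starAe (R := R)).toAlgHom)

theorem quaternionMatrix_apply (q : ℍ[R]) :
    quaternionMatrix q =
      !![q.re, -q.imI, -q.imJ, -q.imK;
         q.imI, q.re, -q.imK, q.imJ;
         q.imJ, q.imK, q.re, -q.imI;
         q.imK, -q.imJ, q.imI, q.re] := by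
  ext i j
  rw [quaternionMatrix, Algebra.leftMulMatrix_eq_repr_mul]
  fin_cases i <;> fin_cases j <;> simp

theorem antiQuaternionMatrix_apply (q : ℍ[R]) :
    antiQuaternionMatrix q =
      !![q.re, q.imI, q.imJ, q.imK;
         -q.imI, q.re, -q.imK, q.imJ;
         -q.imJ, q.imK, q.re, -q.imI;
         -q.imK, -q.imJ, q.imI, q.re] := by
  ext i j
  have h : antiQuaternionMatrix q i j = quaternionBasis.repr (quaternionBasis j * star q) i :=
    LinearMap.toMatrixAlgEquiv_apply ..
  rw [h]
  fin_cases i <;> fin_cases j <;> simp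

theorem commute_antiQuaternionMatrix_quaternionMatrix (p q : ℍ[R]) :
    Commute (antiQuaternionMatrix p) (quaternionMatrix q) := by
  have h : Commute (Algebra.lsmul R R ℍ[R] (Quaternion.starAe p)) (Algebra.lmul R ℍ[R] q) :=
    LinearMap.ext fun v ↦ mul_assoc q v (star p)
  exact h.map (LinearMap.toMatrixAlgEquiv quaternionBasis)

theorem transpose_quaternionMatrix (q : ℍ[R]) :
    (quaternionMatrix q)ᵀ = quaternionMatrix (star q) := by
  ext i j
  fin_cases i <;> fin_cases j <;> simp [quaternionMatrix_apply]

theorem transpose_antiQuaternionMatrix (q : ℍ[R]) :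
    (antiQuaternionMatrix q)ᵀ = antiQuaternionMatrix (star q) := by
  ext i j
  fin_cases i <;> fin_cases j <;> simp [antiQuaternionMatrix_apply]

theorem normSq_equivTuple_symm (t x y z : R) :
    normSq ((Quaternion.equivTuple R).symm ![t, x, y, z]) = t ^ 2 + x ^ 2 + y ^ 2 + z ^ 2 :=
  normSq_def' _

theorem algHom_mul_algHom_star {A : Type*} [Semiring A] [Algebra R A] (f : ℍ[R] →ₐ[R] A)
    (q : ℍ[R]) : f q * f (star q) = algebraMap R A (normSq q) := by
  rw [← map_mul, self_mul_star]
  exact f.commutes (normSq q)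

theorem det_quaternionMatrix (q : ℍ[R]) : (quaternionMatrix q).det = normSq q ^ 2 := by
  have laplace_expansion : (quaternionMatrix q).det =
      q.re * det !![q.re, -q.imK, q.imJ; q.imK, q.re, -q.imI; -q.imJ, q.imI, q.re] +
      q.imI * det !![q.imI, -q.imK, q.imJ; q.imJ, q.re, -q.imI; q.imK, q.imI, q.re] -
      q.imJ * det !![q.imI, q.re, q.imJ; q.imJ, q.imK, -q.imI; q.imK, -q.imJ, q.re] +
      q.imK * det !![q.imI, q.re, -q.imK; q.imJ, q.imK, q.re; q.imK, -q.imJ, q.imI] := by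
    rw [quaternionMatrix_apply, det_succ_row_zero, Fin.sum_univ_four]
    simp [det_fin_three, Fin.succAbove, pow_succ, sub_eq_add_neg]
  rw [laplace_expansion, normSq_def']
  simp only [det_fin_three, of_apply, cons_val', cons_val]
  ring

theorem det_antiQuaternionMatrix (q : ℍ[R]) : (antiQuaternionMatrix q).det = normSq q ^ 2 := by
  let conj : ℍ[R] ≃ₗ[R] ℍ[R] :=
    (Quaternion.starAe (R := R)).toLinearEquiv.trans (MulOpposite.opLinearEquiv R).symm
  have h : Algebra.lsmul R R ℍ[R] (Quaternion.starAe q) =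
      conj ∘ₗ Algebra.lmul R ℍ[R] q ∘ₗ conj.symm := by
    refine LinearMap.ext fun v ↦ ?_
    change v * star q = star (q * star v)
    rw [star_mul, star_star]
  calc (antiQuaternionMatrix q).det
      = LinearMap.det (Algebra.lsmul R R ℍ[R] (Quaternion.starAe q)) := LinearMap.det_toMatrix _ _
    _ = LinearMap.det (Algebra.lmul R ℍ[R] q) := by rw [h, LinearMap.det_conj]
    _ = (quaternionMatrix q).det := (LinearMap.det_toMatrix _ _).symm
    _ = normSq q ^ 2 := det_quaternionMatrix q

theorem transpose_antiQuaternionMatrix_mul_quaternionMatrix (p q : ℍ[R]) :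
    (antiQuaternionMatrix p * quaternionMatrix q)ᵀ =
      antiQuaternionMatrix (star p) * quaternionMatrix (star q) := by
  rw [transpose_mul, transpose_quaternionMatrix, transpose_antiQuaternionMatrix,
    (commute_antiQuaternionMatrix_quaternionMatrix _ _).eq]

theorem antiQuaternionMatrix_mul_quaternionMatrix_mul_transpose (p q : ℍ[R]) :
    antiQuaternionMatrix p * quaternionMatrix q *
        (antiQuaternionMatrix p * quaternionMatrix q)ᵀ =
      (normSq p * normSq q) • (1 : Matrix (Fin 4) (Fin 4) R) := by
  rw [transpose_antiQuaternionMatrix_mul_quaternionMatrix]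
  calc antiQuaternionMatrix p * quaternionMatrix q *
        (antiQuaternionMatrix (star p) * quaternionMatrix (star q))
      = (antiQuaternionMatrix p * antiQuaternionMatrix (star p)) *
          (quaternionMatrix q * quaternionMatrix (star q)) :=
        (commute_antiQuaternionMatrix_quaternionMatrix (star p) q).symm.mul_mul_mul_comm _ _
    _ = (normSq p * normSq q) • (1 : Matrix (Fin 4) (Fin 4) R) := by
        rw [algHom_mul_algHom_star, algHom_mul_algHom_star, ← map_mul,
          Algebra.algebraMap_eq_smul_one]

theorem quaternion_antiquaternion_product_general (p q : ℍ[R])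
    (P : Matrix (Fin 4) (Fin 4) R) (hP : P = antiQuaternionMatrix p * quaternionMatrix q) :
    P = quaternionMatrix q * antiQuaternionMatrix p ∧
    P * Pᵀ = (normSq p * normSq q) • (1 : Matrix (Fin 4) (Fin 4) R) ∧
    Pᵀ * P = (normSq p * normSq q) • (1 : Matrix (Fin 4) (Fin 4) R) ∧
    P.det = (normSq p * normSq q) ^ 2 := by
  subst hP
  refine ⟨commute_antiQuaternionMatrix_quaternionMatrix p q,
    antiQuaternionMatrix_mul_quaternionMatrix_mul_transpose p q, ?_, ?_⟩
  · simpa only [transpose_antiQuaternionMatrix_mul_quaternionMatrix, star_star, normSq_star] using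
      antiQuaternionMatrix_mul_quaternionMatrix_mul_transpose (star p) (star q)
  · rw [det_mul, det_antiQuaternionMatrix, det_quaternionMatrix, mul_pow]

end CommRing

theorem matQ_eq_quaternionMatrix (t x y z : ℝ) :
    matQ t x y z = quaternionMatrix ((Quaternion.equivTuple ℝ).symm ![t, x, y, z]) :=
  (quaternionMatrix_apply ((Quaternion.equivTuple ℝ).symm ![t, x, y, z])).symm

theorem antiQ_eq_antiQuaternionMatrix (t x y z : ℝ) :
    antiQ t x y z = antiQuaternionMatrix ((Quaternion.equivTuple ℝ).symm ![t, x, y, z]) :=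
  (antiQuaternionMatrix_apply ((Quaternion.equivTuple ℝ).symm ![t, x, y, z])).symm

/-- De Casteljau's theorem on quaternion products: the product `P = Q₁*·Q₂` of an
anti-quaternion and a matrix quaternion commutes (`P = Q₂·Q₁*`), satisfies
`P·Pᵀ = Pᵀ·P = n₁n₂·I₄` with `n₁, n₂` the two quaternion norms, and has
determinant `(n₁n₂)²`, so `P` is positive. -/
theorem quaternion_antiquaternion_product (d a b c t x y z : ℝ)
    (P : Matrix (Fin 4) (Fin 4) ℝ) (hP : P = antiQ d a b c * matQ t x y z)
    (n₁ n₂ : ℝ) (hn₁ : n₁ = d ^ 2 + a ^ 2 + b ^ 2 + c ^ 2)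
    (hn₂ : n₂ = t ^ 2 + x ^ 2 + y ^ 2 + z ^ 2) :
    P = matQ t x y z * antiQ d a b c ∧
    P * P.transpose = (n₁ * n₂) • (1 : Matrix (Fin 4) (Fin 4) ℝ) ∧
    P.transpose * P = (n₁ * n₂) • (1 : Matrix (Fin 4) (Fin 4) ℝ) ∧
    P.det = (n₁ * n₂) ^ 2 := by
  rw [matQ_eq_quaternionMatrix, antiQ_eq_antiQuaternionMatrix] at hP ⊢
  simpa only [hn₁, hn₂, normSq_equivTuple_symm] using
    quaternion_antiquaternion_product_general _ _ P hP
end
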